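/- Let N ≥ 2. Let a : [0,1] → ℝ be continuously differentiable, nondecreasing, with a(0) > 0; let b : [0,1] → ℝ be continuous and nonpositive with (d/dr)(b(r)·r) > −1 − (N−1)/r² on (0,1); let f : [0,∞) → ℝ be continuously differentiable and nondecreasing with f(0) = 0, f'(0) = 0, and liminf_{s→+∞} f(s)/s > 1/a(0). Then for every λ̄ ≥ 0 there exist constants K_∞ > 0 and K₂ > 0 such that for every λ ∈ [0, λ̄] and every nonnegative nondecreasing function u : [0,1] → ℝ, continuously differentiable on [0,1] and twice differentiable on (0,1), with u'(0) = u'(1) = 0 and −u''(r) + (b(r)·r − (N−1)/r)·u'(r) + u(r) = a(r)·f(u(r)) + λ on (0,1), one has sup_{r ∈ [0,1]} u(r) ≤ K_∞ and ∫₀¹ (u'(r)² + u(r)²) r^{N−1} dr ≤ K₂². -/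

import Mathlib

open Set Filter

/-- `u` (with derivative `u'` and second derivative `u''`) is a nonnegative
nondecreasing radial solution of the Neumann problem
`-Δu + b(|x|) x·∇u + u = a(|x|) f(u) + lam` on the unit ball of `ℝ^N`,
written in radial coordinates. -/
def IsRadialSol (N : ℕ) (a b f : ℝ → ℝ) (lam : ℝ) (u u' u'' : ℝ → ℝ) : Prop :=
  (∀ r ∈ Set.Icc (0:ℝ) 1, 0 ≤ u r) ∧
  MonotoneOn u (Set.Icc 0 1) ∧
  (∀ r ∈ Set.Icc (0:ℝ) 1, HasDerivWithinAt u (u' r) (Set.Icc 0 1) r) ∧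
  ContinuousOn u' (Set.Icc 0 1) ∧
  (∀ r ∈ Set.Ioo (0:ℝ) 1, HasDerivAt u' (u'' r) r) ∧
  u' 0 = 0 ∧ u' 1 = 0 ∧
  ∀ r ∈ Set.Ioo (0:ℝ) 1,
    -u'' r + (b r * r - ((N : ℝ) - 1) / r) * u' r + u r = a r * f (u r) + lam

/-!
The drift term is nonpositive because `b ≤ 0` and `u' ≥ 0`, so the equation gives
`u'' + (N - 1) / r * u' ≤ u - a(0) f(u)`. The growth condition on `f` bounds the right-hand side by
`C - δ u` for some `δ > 0`, hence by the constant `A = C - δ u(0)`. Integrating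
`(r ^ (N - 1) u')' ≤ A r ^ (N - 1)` gives `u' ≤ A r / N`. The Neumann condition at `r = 1` forces
`A ≥ 0`, which bounds `u(0)` by `C / δ`, and the oscillation of `u` is at most `A / N`.
-/

lemma exists_gt_forall_mul_sub_le_of_lt_liminf_div {f : ℝ → ℝ} {c m : ℝ}
    (hm : ∀ s, 0 ≤ s → m ≤ f s)
    (hc : (c : EReal) < liminf (fun s : ℝ ↦ ((f s / s : ℝ) : EReal)) atTop) :
    ∃ q > c, ∃ C > 0, ∀ s, 0 ≤ s → q * s - C ≤ f s := by
  obtain ⟨q, hcq, hq⟩ := EReal.lt_iff_exists_real_btwn.mp hc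
  obtain ⟨S, hS⟩ := eventually_atTop.mp (eventually_lt_of_lt_liminf hq)
  have hT : 0 < max S 1 := lt_max_of_lt_right one_pos
  refine ⟨q, EReal.coe_lt_coe_iff.mp hcq, |q| * max S 1 + |m| + 1, by positivity, fun s hs ↦ ?_⟩
  rcases le_total (max S 1) s with hTs | hsT
  · have hdiv : q < f s / s := EReal.coe_lt_coe_iff.mp (hS s ((le_max_left _ _).trans hTs))
    have hmul : q * s < f s := (lt_div_iff₀ (hT.trans_le hTs)).mp hdiv
    have hC : 0 ≤ |q| * max S 1 + |m| + 1 := by positivity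
    linarith
  · have hqs : q * s ≤ |q| * max S 1 :=
      mul_le_mul (le_abs_self q) hsT hs (abs_nonneg q)
    linarith [hm s hs, neg_abs_le m]

lemma exists_forall_sub_mul_le_sub_mul_of_lt_liminf_div {f : ℝ → ℝ} {α m : ℝ} (hα : 0 < α)
    (hm : ∀ s, 0 ≤ s → m ≤ f s)
    (hf : ((1 / α : ℝ) : EReal) < liminf (fun s : ℝ ↦ ((f s / s : ℝ) : EReal)) atTop) :
    ∃ δ > 0, ∃ C > 0, ∀ s, 0 ≤ s → s - α * f s ≤ C - δ * s := by
  obtain ⟨q, hq, C, hC, hqC⟩ := exists_gt_forall_mul_sub_le_of_lt_liminf_div hm hf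
  refine ⟨α * q - 1, sub_pos.mpr ((div_lt_iff₀' hα).mp hq), α * C, mul_pos hα hC, fun s hs ↦ ?_⟩
  linarith [mul_le_mul_of_nonneg_left (hqC s hs) hα.le]

lemma hasDerivAt_rpow_mul_sub_div_mul {d A t v₁ : ℝ} {v : ℝ → ℝ} (hd : d + 1 ≠ 0) (ht : t ≠ 0)
    (hv : HasDerivAt v v₁ t) :
    HasDerivAt (fun t ↦ t ^ d * (v t - A / (d + 1) * t)) (t ^ d * (v₁ + d / t * v t - A)) t := by
  refine ((Real.hasDerivAt_rpow_const (p := d) (Or.inl ht)).fun_mul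
    (hv.fun_sub ((hasDerivAt_id' t).const_mul (A / (d + 1))))).congr_deriv ?_
  rw [Real.rpow_sub_one ht]
  field_simp
  ring

lemma le_div_mul_of_deriv_add_div_mul_le {d A R : ℝ} {v v' : ℝ → ℝ} (hd : 0 ≤ d)
    (hv : ContinuousOn v (Icc 0 R)) (hv' : ∀ r ∈ Ioo 0 R, HasDerivAt v (v' r) r) (hv0 : v 0 ≤ 0)
    (hle : ∀ r ∈ Ioo 0 R, v' r + d / r * v r ≤ A) {r : ℝ} (hr : r ∈ Icc 0 R) :
    v r ≤ A / (d + 1) * r := by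
  rcases hr.1.eq_or_lt with rfl | hr0
  · simpa only [mul_zero] using hv0
  have hcont : ContinuousOn (fun t ↦ t ^ d * (v t - A / (d + 1) * t)) (Icc 0 R) :=
    (Real.continuous_rpow_const hd).continuousOn.mul (by fun_prop)
  have hanti : AntitoneOn (fun t ↦ t ^ d * (v t - A / (d + 1) * t)) (Icc 0 R) := by
    refine antitoneOn_of_hasDerivWithinAt_nonpos (convex_Icc 0 R) hcont
      (f' := fun t ↦ t ^ d * (v' t + d / t * v t - A)) ?_ ?_ <;> rw [interior_Icc]
    · exact fun t ht ↦
        (hasDerivAt_rpow_mul_sub_div_mul (by positivity) ht.1.ne' (hv' t ht)).hasDerivWithinAt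
    · exact fun t ht ↦ mul_nonpos_of_nonneg_of_nonpos (Real.rpow_nonneg ht.1.le d)
        (sub_nonpos.mpr (hle t ht))
  have hzero : (0 : ℝ) ^ d * (v 0 - A / (d + 1) * 0) ≤ 0 :=
    mul_nonpos_of_nonneg_of_nonpos (Real.rpow_nonneg le_rfl d) (by simpa only [mul_zero, sub_zero])
  have hprod : r ^ d * (v r - A / (d + 1) * r) ≤ 0 :=
    (hanti (left_mem_Icc.mpr (hr.1.trans hr.2)) hr hr.1).trans hzero
  exact sub_nonpos.mp (nonpos_of_mul_nonpos_right hprod (Real.rpow_pos_of_pos hr0 d))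

lemma integral_sq_add_sq_mul_pow_le {u v : ℝ → ℝ} {K M R : ℝ} (k : ℕ) (hR : 0 ≤ R)
    (hu : ContinuousOn u (Icc 0 R)) (hv : ContinuousOn v (Icc 0 R))
    (huK : ∀ r ∈ Icc 0 R, |u r| ≤ K) (hvM : ∀ r ∈ Icc 0 R, |v r| ≤ M) :
    ∫ r in 0..R, (v r ^ 2 + u r ^ 2) * r ^ k ≤ (M ^ 2 + K ^ 2) * (R ^ (k + 1) / (k + 1)) := by
  calc ∫ r in 0..R, (v r ^ 2 + u r ^ 2) * r ^ k
      ≤ ∫ r in 0..R, (M ^ 2 + K ^ 2) * r ^ k := by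
        refine intervalIntegral.integral_mono_on hR
          (ContinuousOn.intervalIntegrable_of_Icc hR (by fun_prop))
          (Continuous.intervalIntegrable (by fun_prop) _ _) fun r hr ↦ ?_
        exact mul_le_mul_of_nonneg_right
          (add_le_add (sq_le_sq.mpr ((hvM r hr).trans (le_abs_self M)))
            (sq_le_sq.mpr ((huK r hr).trans (le_abs_self K)))) (pow_nonneg hr.1 k)
    _ = (M ^ 2 + K ^ 2) * (R ^ (k + 1) / (k + 1)) := by
        rw [intervalIntegral.integral_const_mul, integral_pow, zero_pow k.succ_ne_zero, sub_zero]

namespace IsRadialSol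

variable {N : ℕ} {a b f u u' u'' : ℝ → ℝ} {lam δ C r : ℝ}

lemma nonneg (h : IsRadialSol N a b f lam u u' u'') (hr : r ∈ Icc (0 : ℝ) 1) : 0 ≤ u r :=
  h.1 r hr

lemma hasDerivWithinAt (h : IsRadialSol N a b f lam u u' u'') (hr : r ∈ Icc (0 : ℝ) 1) :
    HasDerivWithinAt u (u' r) (Icc 0 1) r :=
  h.2.2.1 r hr

lemma deriv_nonneg (h : IsRadialSol N a b f lam u u' u'') (hr : r ∈ Icc (0 : ℝ) 1) :
    0 ≤ u' r := by
  rw [← (h.hasDerivWithinAt hr).derivWithin (uniqueDiffOn_Icc zero_lt_one r hr)]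
  exact h.2.1.derivWithin_nonneg

lemma apply_zero_le (h : IsRadialSol N a b f lam u u' u'') (hr : r ∈ Icc (0 : ℝ) 1) :
    u 0 ≤ u r :=
  h.2.1 (left_mem_Icc.mpr zero_le_one) hr hr.1

lemma continuousOn (h : IsRadialSol N a b f lam u u' u'') : ContinuousOn u (Icc 0 1) :=
  fun _ hr ↦ (h.hasDerivWithinAt hr).continuousWithinAt

lemma radialLaplacian_le (h : IsRadialSol N a b f lam u u' u'')
    (ha : ∀ r ∈ Icc (0 : ℝ) 1, a 0 ≤ a r) (hb : ∀ r ∈ Icc (0 : ℝ) 1, b r ≤ 0)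
    (hf : ∀ s, 0 ≤ s → 0 ≤ f s) (hlam : 0 ≤ lam) (hr : r ∈ Ioo (0 : ℝ) 1) :
    u'' r + ((N : ℝ) - 1) / r * u' r ≤ u r - a 0 * f (u r) := by
  have hr' : r ∈ Icc (0 : ℝ) 1 := Ioo_subset_Icc_self hr
  have hdrift : b r * r * u' r ≤ 0 := mul_nonpos_of_nonpos_of_nonneg
    (mul_nonpos_of_nonpos_of_nonneg (hb r hr') hr'.1) (h.deriv_nonneg hr')
  have hreaction : a 0 * f (u r) ≤ a r * f (u r) :=
    mul_le_mul_of_nonneg_right (ha r hr') (hf _ (h.nonneg hr'))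
  obtain ⟨-, -, -, -, -, -, -, heq⟩ := h
  linarith [heq r hr]

lemma deriv_le_div_mul (h : IsRadialSol N a b f lam u u' u'') (hN : 1 ≤ N) (hδ : 0 ≤ δ)
    (hle : ∀ r ∈ Ioo (0 : ℝ) 1, u'' r + ((N : ℝ) - 1) / r * u' r ≤ C - δ * u r)
    (hr : r ∈ Icc (0 : ℝ) 1) : u' r ≤ (C - δ * u 0) / N * r := by
  obtain ⟨-, -, -, hcont, hu'', hu'0, -, -⟩ := id h
  have hd : (0 : ℝ) ≤ (N : ℝ) - 1 := sub_nonneg.mpr (Nat.one_le_cast.mpr hN)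
  have hle0 : ∀ t ∈ Ioo (0 : ℝ) 1, u'' t + ((N : ℝ) - 1) / t * u' t ≤ C - δ * u 0 := fun t ht ↦
    (hle t ht).trans <| sub_le_sub_left
      (mul_le_mul_of_nonneg_left (h.apply_zero_le (Ioo_subset_Icc_self ht)) hδ) C
  simpa only [sub_add_cancel] using
    le_div_mul_of_deriv_add_div_mul_le hd hcont hu'' hu'0.le hle0 hr

lemma mul_apply_zero_le (h : IsRadialSol N a b f lam u u' u'') (hN : 1 ≤ N) (hδ : 0 ≤ δ)
    (hle : ∀ r ∈ Ioo (0 : ℝ) 1, u'' r + ((N : ℝ) - 1) / r * u' r ≤ C - δ * u r) :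
    δ * u 0 ≤ C := by
  have hNpos : (0 : ℝ) < N := Nat.cast_pos.mpr hN
  have hderiv : 0 ≤ (C - δ * u 0) / N := by
    simpa only [mul_one] using (h.deriv_nonneg (right_mem_Icc.mpr zero_le_one)).trans
      (h.deriv_le_div_mul hN hδ hle (right_mem_Icc.mpr zero_le_one))
  rwa [le_div_iff₀ hNpos, zero_mul, sub_nonneg] at hderiv

lemma deriv_le (h : IsRadialSol N a b f lam u u' u'') (hN : 1 ≤ N) (hδ : 0 ≤ δ)
    (hle : ∀ r ∈ Ioo (0 : ℝ) 1, u'' r + ((N : ℝ) - 1) / r * u' r ≤ C - δ * u r)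
    (hr : r ∈ Icc (0 : ℝ) 1) : u' r ≤ C := by
  have hA : 0 ≤ C - δ * u 0 := sub_nonneg.mpr (h.mul_apply_zero_le hN hδ hle)
  have hu0 : 0 ≤ u 0 := h.nonneg (left_mem_Icc.mpr zero_le_one)
  calc u' r ≤ (C - δ * u 0) / N * r := h.deriv_le_div_mul hN hδ hle hr
    _ ≤ (C - δ * u 0) / N := mul_le_of_le_one_right (by positivity) hr.2
    _ ≤ C - δ * u 0 := div_le_self hA (Nat.one_le_cast.mpr hN)
    _ ≤ C := sub_le_self C (by positivity)

lemma apply_le_div_add (h : IsRadialSol N a b f lam u u' u'') (hN : 1 ≤ N) (hδ : 0 < δ)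
    (hle : ∀ r ∈ Ioo (0 : ℝ) 1, u'' r + ((N : ℝ) - 1) / r * u' r ≤ C - δ * u r)
    (hr : r ∈ Icc (0 : ℝ) 1) : u r ≤ C / δ + C := by
  have h0 : (0 : ℝ) ∈ Icc (0 : ℝ) 1 := left_mem_Icc.mpr zero_le_one
  have hC : 0 ≤ C := (h.deriv_nonneg h0).trans (h.deriv_le hN hδ.le hle h0)
  have hu' : ∀ t ∈ Ioo (0 : ℝ) 1, HasDerivAt u (u' t) t := fun t ht ↦
    (h.hasDerivWithinAt (Ioo_subset_Icc_self ht)).hasDerivAt (Icc_mem_nhds ht.1 ht.2)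
  have hosc : u r - u 0 ≤ C * (r - 0) := by
    refine (convex_Icc (0 : ℝ) 1).image_sub_le_mul_sub_of_deriv_le h.continuousOn ?_ ?_
      0 h0 r hr hr.1 <;> rw [interior_Icc]
    · exact fun t ht ↦ (hu' t ht).differentiableAt.differentiableWithinAt
    · exact fun t ht ↦
        (hu' t ht).deriv.trans_le (h.deriv_le hN hδ.le hle (Ioo_subset_Icc_self ht))
  have hcenter : u 0 ≤ C / δ := (le_div_iff₀' hδ).mpr (h.mul_apply_zero_le hN hδ.le hle)
  have hCr : C * r ≤ C := mul_le_of_le_one_right hC hr.2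
  linarith

lemma integral_le (h : IsRadialSol N a b f lam u u' u'') (hN : 1 ≤ N) (hδ : 0 < δ)
    (hle : ∀ r ∈ Ioo (0 : ℝ) 1, u'' r + ((N : ℝ) - 1) / r * u' r ≤ C - δ * u r) :
    ∫ r in (0 : ℝ)..1, (u' r ^ 2 + u r ^ 2) * r ^ (N - 1) ≤ (C ^ 2 + (C / δ + C) ^ 2) / N := by
  have hu : ∀ r ∈ Icc (0 : ℝ) 1, |u r| ≤ C / δ + C := fun r hr ↦
    (abs_of_nonneg (h.nonneg hr)).trans_le (h.apply_le_div_add hN hδ hle hr)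
  have hu' : ∀ r ∈ Icc (0 : ℝ) 1, |u' r| ≤ C := fun r hr ↦
    (abs_of_nonneg (h.deriv_nonneg hr)).trans_le (h.deriv_le hN hδ.le hle hr)
  have hint := integral_sq_add_sq_mul_pow_le (N - 1) zero_le_one h.continuousOn h.2.2.2.1 hu hu'
  rwa [one_pow, Nat.cast_pred hN, sub_add_cancel, mul_one_div] at hint

end IsRadialSol

theorem stmt_8_general (N : ℕ) (hN : 1 ≤ N) (a b f : ℝ → ℝ)
    (ha : ∀ r ∈ Icc (0 : ℝ) 1, a 0 ≤ a r) (ha0 : 0 < a 0)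
    (hb_nonpos : ∀ r ∈ Icc (0 : ℝ) 1, b r ≤ 0)
    (hf_nonneg : ∀ s, 0 ≤ s → 0 ≤ f s)
    (hf_liminf : ((1 / a 0 : ℝ) : EReal) <
      liminf (fun s : ℝ ↦ ((f s / s : ℝ) : EReal)) atTop) :
    ∃ Kinf > (0 : ℝ), ∃ K₂ > (0 : ℝ),
      ∀ lam, 0 ≤ lam → ∀ u u' u'' : ℝ → ℝ, IsRadialSol N a b f lam u u' u'' →
        (∀ r ∈ Icc (0 : ℝ) 1, u r ≤ Kinf) ∧
        ∫ r in (0 : ℝ)..1, (u' r ^ 2 + u r ^ 2) * r ^ (N - 1) ≤ K₂ ^ 2 := by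
  obtain ⟨δ, hδ, C, hC, hgrowth⟩ :=
    exists_forall_sub_mul_le_sub_mul_of_lt_liminf_div ha0 hf_nonneg hf_liminf
  refine ⟨C / δ + C, by positivity, √((C ^ 2 + (C / δ + C) ^ 2) / N), by positivity, ?_⟩
  intro lam hlam u u' u'' h
  have hle : ∀ r ∈ Ioo (0 : ℝ) 1, u'' r + ((N : ℝ) - 1) / r * u' r ≤ C - δ * u r := fun r hr ↦
    (h.radialLaplacian_le ha hb_nonpos hf_nonneg hlam hr).trans
      (hgrowth (u r) (h.nonneg (Ioo_subset_Icc_self hr)))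
  refine ⟨fun r hr ↦ h.apply_le_div_add hN hδ hle hr, ?_⟩
  rw [Real.sq_sqrt (by positivity)]
  exact h.integral_le hN hδ hle

/-- Uniform a priori `L^∞` and `H¹` bounds for nonnegative nondecreasing radial
solutions of the family of Neumann problems with parameter `λ ∈ [0, λ̄]`. -/
theorem stmt_8 (N : ℕ) (hN : 2 ≤ N) (a b f : ℝ → ℝ)
    (ha_diff : ContDiffOn ℝ 1 a (Icc 0 1))
    (ha_mono : MonotoneOn a (Icc 0 1))
    (ha0 : 0 < a 0)
    (hb_cont : ContinuousOn b (Icc 0 1))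
    (hb_nonpos : ∀ r ∈ Icc (0:ℝ) 1, b r ≤ 0)
    (hrb_diff : ∀ r ∈ Ioo (0:ℝ) 1, DifferentiableAt ℝ (fun t => b t * t) r)
    (hrb : ∀ r ∈ Ioo (0:ℝ) 1,
      -1 - ((N : ℝ) - 1) / r ^ 2 < deriv (fun t => b t * t) r)
    (hf_diff : ContDiffOn ℝ 1 f (Ici 0))
    (hf_mono : MonotoneOn f (Ici 0))
    (hf0 : f 0 = 0)
    (hf'0 : derivWithin f (Ici 0) 0 = 0)
    (hf_liminf : ((1 / a 0 : ℝ) : EReal) <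
      Filter.liminf (fun s : ℝ => ((f s / s : ℝ) : EReal)) Filter.atTop) :
    ∀ lambar : ℝ, 0 ≤ lambar →
      ∃ Kinf > (0:ℝ), ∃ K₂ > (0:ℝ),
        ∀ lam ∈ Icc (0:ℝ) lambar, ∀ u u' u'' : ℝ → ℝ,
          IsRadialSol N a b f lam u u' u'' →
            (∀ r ∈ Icc (0:ℝ) 1, u r ≤ Kinf) ∧
            ∫ r in (0:ℝ)..1, (u' r ^ 2 + u r ^ 2) * r ^ (N - 1) ≤ K₂ ^ 2 := by
  intro lambar _
  obtain ⟨Kinf, hKinf, K₂, hK₂, hbound⟩ := stmt_8_general N (one_le_two.trans hN) a b f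
    (fun r hr ↦ ha_mono (left_mem_Icc.mpr zero_le_one) hr hr.1) ha0 hb_nonpos
    (fun s hs ↦ hf0 ▸ hf_mono self_mem_Ici hs hs) hf_liminf
  exact ⟨Kinf, hKinf, K₂, hK₂, fun lam hlam ↦ hbound lam hlam.1⟩
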